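/- Let M₁, …, M_p be matrices over a field, where Mᵢ has gᵢ ≥ 1 rows and m columns, let f be a natural number, and suppose that for each i there is a set Tᵢ of column indices with |Tᵢ| ≥ gᵢ + f such that the columns of Mᵢ indexed by Tᵢ form a full spark frame and every column of Mᵢ with index outside Tᵢ is zero. Then the minimum of |S| over all sets S ⊆ {1, …, m} satisfying rank((Mᵢ)_{S∖F}) = gᵢ for all i and all F ⊆ S with |F| ≤ f equals the minimum of |S| over all sets S ⊆ {1, …, m} satisfying |S ∩ Tᵢ| ≥ gᵢ + f for all i; moreover these two feasible families of sets S coincide. -/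

import Mathlib

/-!
Both feasibility conditions can be compared one matrix at a time. For a matrix `M` with `g` rows
whose columns vanish outside `T` and form a full spark frame on `T`, the columns indexed by `U`
span the whole space iff `g ≤ |U ∩ T|`: only the columns in `U ∩ T` contribute to the span, and
any `g` of them are independent (`rank_colSub_eq_iff`). Deleting at most `f` indices from `S`
lowers `|S ∩ T|` by at most `f`, and a worst-case deletion takes all its indices from `S ∩ T`; hence
full rank survives every such deletion iff `|S ∩ T| ≥ g + f` (`forall_rank_sdiff_eq_iff`).
The feasible families are therefore equal, and so are the minimal cardinalities.
-/

open Matrix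

/-- The submatrix of `M` formed by the columns indexed by `S`. -/
def colSub {K : Type*} [Field K] {g m : ℕ} (M : Matrix (Fin g) (Fin m) K)
    (S : Finset (Fin m)) : Matrix (Fin g) {j // j ∈ S} K :=
  M.submatrix id Subtype.val

/-- The columns of the `g`-row matrix `M` indexed by `T` form a full spark
frame: every `g`-element subset of `T` indexes a linearly independent family of
columns of `M`. -/
def IsFullSpark {K : Type*} [Field K] {g m : ℕ} (M : Matrix (Fin g) (Fin m) K)
    (T : Finset (Fin m)) : Prop :=
  ∀ S' ⊆ T, S'.card = g →
    LinearIndependent K (fun j : {j // j ∈ S'} => fun i => M i j.val)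

/-- Zero columns do not contribute to the rank. -/
lemma rank_colSub_le_card_inter {K : Type*} [Field K] {g m : ℕ}
    (M : Matrix (Fin g) (Fin m) K) (T U : Finset (Fin m))
    (hzero : ∀ j ∉ T, ∀ r, M r j = 0) :
    (colSub M U).rank ≤ (U ∩ T).card := by
  classical
  rw [Matrix.rank_eq_finrank_span_cols]
  have hle : Submodule.span K (Set.range (colSub M U).col) ≤
      Submodule.span K (((U ∩ T).image M.col : Finset (Fin g → K)) : Set (Fin g → K)) := by
    rw [Submodule.span_le]
    rintro _ ⟨⟨j, hj⟩, rfl⟩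
    by_cases hjT : j ∈ T
    · apply Submodule.subset_span
      simp only [Finset.coe_image]
      exact ⟨j, by simp [hj, hjT], rfl⟩
    · have h0 : (colSub M U).col ⟨j, hj⟩ = 0 := by
        funext r
        exact hzero j hjT r
      rw [h0]
      exact Submodule.zero_mem _
  calc _ ≤ _ := Submodule.finrank_mono hle
    _ ≤ ((U ∩ T).image M.col).card := finrank_span_finset_le_card _
    _ ≤ _ := Finset.card_image_le

lemma rank_colSub_eq_iff {K : Type*} [Field K] {g m : ℕ}
    (M : Matrix (Fin g) (Fin m) K) (T U : Finset (Fin m))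
    (hspark : IsFullSpark M T) (hzero : ∀ j ∉ T, ∀ r, M r j = 0) :
    (colSub M U).rank = g ↔ g ≤ (U ∩ T).card := by
  refine ⟨fun h => h.symm.le.trans (rank_colSub_le_card_inter M T U hzero), fun h => ?_⟩
  obtain ⟨S', hS', hcard⟩ := Finset.exists_subset_card_eq h
  have hli := hspark S' (hS'.trans Finset.inter_subset_right) hcard
  refine le_antisymm ((Matrix.rank_le_card_height _).trans_eq (Fintype.card_fin g)) ?_
  have hspan : Submodule.span K (Set.range fun j : {j // j ∈ S'} => fun i => M i j.val) ≤
      Submodule.span K (Set.range (colSub M U).col) := by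
    apply Submodule.span_mono
    rintro v ⟨j, hv⟩
    exact ⟨⟨j.val, (Finset.mem_inter.mp (hS' j.property)).1⟩, hv⟩
  have hfr := finrank_span_eq_card hli
  rw [Fintype.card_coe] at hfr
  have hle := Submodule.finrank_mono hspan
  rw [hfr, hcard] at hle
  rwa [Matrix.rank_eq_finrank_span_cols]

lemma forall_rank_sdiff_eq_iff {K : Type*} [Field K] {g m : ℕ} (hg : 1 ≤ g) (f : ℕ)
    (M : Matrix (Fin g) (Fin m) K) (T S : Finset (Fin m))
    (hspark : IsFullSpark M T) (hzero : ∀ j ∉ T, ∀ r, M r j = 0) :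
    (∀ F ⊆ S, F.card ≤ f → (colSub M (S \ F)).rank = g) ↔ g + f ≤ (S ∩ T).card := by
  simp only [rank_colSub_eq_iff M T _ hspark hzero]
  constructor
  · intro h
    -- If `|S ∩ T| ≤ f`, the adversary removes all of `S ∩ T`, which is excluded by `1 ≤ g`.
    obtain ⟨F, hF, hcard⟩ := Finset.exists_subset_card_eq (Nat.min_le_right f (S ∩ T).card)
    have h1 := h F (hF.trans Finset.inter_subset_left) (by omega)
    rw [Finset.sdiff_inter_right_comm, Finset.card_sdiff_of_subset hF] at h1
    omega
  · intro h F _ hFf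
    rw [Finset.sdiff_inter_right_comm]
    have := Finset.le_card_sdiff F (S ∩ T)
    omega

/-- **Equivalence of robust minimal actuator selection and set multicover.**
If, for each `i`, the columns of `Mᵢ` indexed by `Tᵢ` (with `|Tᵢ| ≥ gᵢ + f`)
form a full spark frame and all other columns of `Mᵢ` are zero, then a set `S`
is a feasible robust selection tolerating `f` faults iff `|S ∩ Tᵢ| ≥ gᵢ + f`
for all `i`, and the minimal cardinalities of feasible sets coincide. -/
theorem robust_minimal_selection_eq_set_multicover {K : Type*} [Field K] {p m : ℕ}
    (g : Fin p → ℕ) (hg : ∀ i, 1 ≤ g i) (f : ℕ)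
    (M : (i : Fin p) → Matrix (Fin (g i)) (Fin m) K)
    (T : Fin p → Finset (Fin m))
    (hT : ∀ i, g i + f ≤ (T i).card)
    (hspark : ∀ i, IsFullSpark (M i) (T i))
    (hzero : ∀ i, ∀ j ∉ T i, ∀ r, M i r j = 0) :
    (∀ S : Finset (Fin m),
        (∀ i, ∀ F ⊆ S, F.card ≤ f → (colSub (M i) (S \ F)).rank = g i) ↔
          (∀ i, g i + f ≤ (S ∩ T i).card)) ∧
    sInf {k : ℕ | ∃ S : Finset (Fin m),
        (∀ i, ∀ F ⊆ S, F.card ≤ f → (colSub (M i) (S \ F)).rank = g i) ∧ S.card = k} =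
      sInf {k : ℕ | ∃ S : Finset (Fin m),
        (∀ i, g i + f ≤ (S ∩ T i).card) ∧ S.card = k} := by
  have key : ∀ S : Finset (Fin m),
      (∀ i, ∀ F ⊆ S, F.card ≤ f → (colSub (M i) (S \ F)).rank = g i) ↔
        (∀ i, g i + f ≤ (S ∩ T i).card) := fun S =>
    forall_congr' fun i =>
      forall_rank_sdiff_eq_iff (hg i) f (M i) (T i) S (hspark i) (hzero i)
  exact ⟨key, by simp only [key]⟩
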